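/- arXiv:1503.02702 — 5 statements merged into one kernel-verified Lean document; each statement's English description precedes it below -/
import Mathlib

section
/- If the side lengths a, b, c of a nondegenerate triangle are all prime numbers, then the area of the triangle is not a positive integer. Equivalently: there is no positive integer n with 16·n² = (a+b+c)·(−a+b+c)·(a−b+c)·(a+b−c). -/
/-!
The four factors of Heron's product all have the parity of the perimeter, and the product is
`16 * n ^ 2`, so the perimeter is even. If moreover `a ≤ 2`, then `b - c` has the parity of `a` and
`|b - c| < a`, which leaves only `a = 2` and `b = c`; the equation becomes `n ^ 2 = b ^ 2 - 1` with
`1 < b`, but no two positive squares differ by `1`. Hence every side exceeds `2`, and three odd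
sides would make the perimeter odd.
-/

/-- Heron's product, which is `16 * S ^ 2` for the area `S` of a triangle with sides `a`, `b`, `c`.
No triangle inequality is built in: without one the value need not be positive. -/
def heronProduct {R : Type*} [CommRing R] (a b c : R) : R :=
  (a + b + c) * (-a + b + c) * (a - b + c) * (a + b - c)

theorem heronProduct_rotate {R : Type*} [CommRing R] (a b c : R) :
    heronProduct b c a = heronProduct a b c := by
  unfold heronProduct
  ring

theorem heronProduct_isosceles {R : Type*} [CommRing R] (a b : R) :
    heronProduct a b b = a ^ 2 * (4 * b ^ 2 - a ^ 2) := by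
  unfold heronProduct
  ring

theorem even_heronProduct_iff {a b c : ℤ} : Even (heronProduct a b c) ↔ Even (a + b + c) := by
  simp only [heronProduct, Int.even_mul, Int.even_add, Int.even_sub, even_neg]
  tauto

theorem even_perimeter_of_sixteen_mul_sq_eq_heronProduct {a b c n : ℤ}
    (h : 16 * n ^ 2 = heronProduct a b c) : Even (a + b + c) := by
  rw [← even_heronProduct_iff, ← h]
  exact Even.mul_right (by decide) _

theorem sq_ne_sq_sub_one {m n : ℤ} (hm : 1 < m) : n ^ 2 ≠ m ^ 2 - 1 := by
  intro h
  have factored : (m - n) * (m + n) = 1 := by linear_combination -h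
  rcases Int.mul_eq_one_iff_eq_one_or_neg_one.mp factored with ⟨_, _⟩ | ⟨_, _⟩ <;> omega

theorem two_lt_side_of_sixteen_mul_sq_eq_heronProduct {a b c n : ℤ}
    (hab : a < b + c) (hbc : b < a + c) (hca : c < a + b)
    (h : 16 * n ^ 2 = heronProduct a b c) : 2 < a := by
  by_contra! ha
  obtain ⟨s, hs⟩ := even_perimeter_of_sixteen_mul_sq_eq_heronProduct h
  obtain ⟨rfl, rfl⟩ : a = 2 ∧ b = c := by omega
  rw [heronProduct_isosceles] at h
  exact sq_ne_sq_sub_one (m := b) (n := n) (by omega) (by linarith)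

theorem triangle_prime_sides_area_not_integer_general {a b c : ℤ}
    (ha : a = 2 ∨ Odd a) (hb : b = 2 ∨ Odd b) (hc : c = 2 ∨ Odd c)
    (hab : a < b + c) (hbc : b < a + c) (hca : c < a + b) (n : ℤ) :
    16 * n ^ 2 ≠ heronProduct a b c := by
  intro h
  have two_lt_a : 2 < a := two_lt_side_of_sixteen_mul_sq_eq_heronProduct hab hbc hca h
  have two_lt_b : 2 < b :=
    two_lt_side_of_sixteen_mul_sq_eq_heronProduct (by omega) (by omega) (by omega)
      (h.trans (heronProduct_rotate a b c).symm)
  have two_lt_c : 2 < c :=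
    two_lt_side_of_sixteen_mul_sq_eq_heronProduct (by omega) (by omega) (by omega)
      (h.trans (heronProduct_rotate c a b))
  have odd_perimeter : Odd (a + b + c) :=
    ((ha.resolve_left two_lt_a.ne').add_odd (hb.resolve_left two_lt_b.ne')).add_odd
      (hc.resolve_left two_lt_c.ne')
  exact Int.not_even_iff_odd.mpr odd_perimeter
    (even_perimeter_of_sixteen_mul_sq_eq_heronProduct h)

theorem triangle_prime_sides_area_not_integer (a b c : ℕ)
    (ha : Nat.Prime a) (hb : Nat.Prime b) (hc : Nat.Prime c)
    (hab : (a : ℤ) < b + c) (hbc : (b : ℤ) < a + c) (hca : (c : ℤ) < a + b) :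
    ¬ ∃ n : ℕ, 0 < n ∧
      16 * (n : ℤ) ^ 2 =
        ((a : ℤ) + b + c) * (-(a : ℤ) + b + c) * ((a : ℤ) - b + c) * ((a : ℤ) + b - c) := by
  rintro ⟨n, -, h⟩
  exact triangle_prime_sides_area_not_integer_general (mod_cast ha.eq_two_or_odd')
    (mod_cast hb.eq_two_or_odd') (mod_cast hc.eq_two_or_odd') hab hbc hca n h
end

section
/- The positive integers equal to the sum of the factorials of their decimal digits are exactly 1, 2, 145 and 40585. That is, for a positive integer n, n equals the sum of d! over the decimal digits d of n if and only if n ∈ {1, 2, 145, 40585}. -/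
/-!
A number with more than seven digits exceeds `9!` times its number of digits, so it is too large to
be the sum of the factorials of its digits. For the remaining lengths, that sum depends only on the
multiset of digits. It is therefore enough to run through the multisets of at most seven digits,
rather than through the numbers themselves, and to test the sum arising from each; those multisets
whose sum has fewer digits than they have elements can be skipped.
-/

section DigitSum

variable {f : ℕ → ℕ} {b n L M : ℕ}

theorem sum_map_digits_le (hb : 1 < b) (hf : ∀ d < b, f d ≤ M) (n : ℕ) :
    ((b.digits n).map f).sum ≤ (b.digits n).length * M := by
  have hle : ∀ y ∈ (b.digits n).map f, y ≤ M :=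
    List.forall_mem_map.2 fun d hd ↦ hf d (Nat.digits_lt_base hb hd)
  simpa using List.sum_le_card_nsmul _ _ hle

theorem succ_mul_lt_pow_of_le {l : ℕ} (hb : 1 < b) (hL : (L + 1) * M < b ^ L) (hl : L ≤ l) :
    (l + 1) * M < b ^ l := by
  induction l, hl using Nat.le_induction with
  | base => exact hL
  | succ l _ ih =>
    calc (l + 1 + 1) * M ≤ b * ((l + 1) * M) := by
          rw [← mul_assoc]
          exact Nat.mul_le_mul_right M (by nlinarith)
      _ < b * b ^ l := Nat.mul_lt_mul_of_pos_left ih (by lia)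
      _ = b ^ (l + 1) := (pow_succ' b l).symm

theorem length_digits_le_of_eq_sum_map_digits (hb : 1 < b) (hf : ∀ d < b, f d ≤ M)
    (hL : (L + 1) * M < b ^ L) (h : n = ((b.digits n).map f).sum) :
    (b.digits n).length ≤ L := by
  by_contra! hlt
  obtain ⟨l, hl⟩ := Nat.exists_eq_add_of_lt hlt
  have hpow : b ^ (L + l) ≤ n := (Nat.lt_digits_length_iff hb n).1 (by lia)
  have hsum : n ≤ (L + l + 1) * M := hl ▸ h.trans_le (sum_map_digits_le hb hf n)
  exact (succ_mul_lt_pow_of_le hb hL (Nat.le_add_right L l)).not_ge (hpow.trans hsum)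

end DigitSum

/-- A decidable search establishing `P (s + f d₁ + ⋯ + f dₖ)` for all digits `d₁, …, dₖ ≤ d` such
that this number is at least `lo`. It branches on the multiplicity `c` of the largest admissible
digit, so that no multiset of digits is visited twice. The first disjunct prunes: for monotone `f`,
no completion of the branch reaches `lo`. At a leaf `P` is required even below `lo`. -/
def SumSearch (P : ℕ → Prop) (f : ℕ → ℕ) (lo : ℕ) : (d k s : ℕ) → Prop
  | 0, k, s => P (s + k * f 0)
  | d + 1, k, s =>
    s + k * f (d + 1) < lo ∨ ∀ c ≤ k, SumSearch P f lo d (k - c) (s + c * f (d + 1))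

namespace SumSearch

variable {P : ℕ → Prop} {f : ℕ → ℕ} {lo d k s n : ℕ}

instance decidable [DecidablePred P] : ∀ d k s, Decidable (SumSearch P f lo d k s)
  | 0, k, s => inferInstanceAs (Decidable (P (s + k * f 0)))
  | d + 1, k, s =>
    have := decidable d
    inferInstanceAs (Decidable (s + k * f (d + 1) < lo ∨
      ∀ c ≤ k, SumSearch P f lo d (k - c) (s + c * f (d + 1))))

theorem sound (hf : Monotone f) (h : SumSearch P f lo d k s) {m : Multiset ℕ} (hcard : m.card = k)
    (hm : ∀ x ∈ m, x ≤ d) (hlo : lo ≤ n) (hn : n = s + (m.map f).sum) : P n := by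
  induction d generalizing k s m with
  | zero =>
    have hrep : m = Multiset.replicate k 0 :=
      Multiset.eq_replicate.2 ⟨hcard, fun x hx ↦ Nat.le_zero.1 (hm x hx)⟩
    simpa [SumSearch, hn, hrep] using h
  | succ d ih =>
    rcases h with hprune | hbranch
    · have hsum : (m.map f).sum ≤ k * f (d + 1) := by
        simpa [hcard] using
          Multiset.sum_le_card_nsmul (m.map f) (f (d + 1)) (by simpa using fun x hx ↦ hf (hm x hx))
      lia
    · set c := m.count (d + 1)
      set r := m.filter (· ≠ d + 1)
      have hsplit : Multiset.replicate c (d + 1) + r = m := by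
        rw [← Multiset.filter_eq', Multiset.filter_add_not]
      have hcr : c + r.card = k := by simpa [hcard] using congrArg Multiset.card hsplit
      have hsum : n = s + c * f (d + 1) + (r.map f).sum := by
        simp [hn, ← hsplit, add_assoc]
      have hmr : ∀ x ∈ r, x ≤ d := fun x hx ↦ by
        obtain ⟨hxm, hne⟩ := Multiset.mem_filter.1 hx
        exact Nat.le_of_lt_succ ((hm x hxm).lt_of_ne hne)
      exact ih (hbranch c (by lia)) (by lia) hmr hsum

theorem of_length_digits {b L : ℕ} (hf : Monotone f) (hb : 1 < b)
    (h : SumSearch P f (b ^ L) (b - 1) (L + 1) 0) (hlen : (b.digits n).length = L + 1)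
    (hn : n = ((b.digits n).map f).sum) : P n := by
  have hdigit : ∀ x ∈ (b.digits n : Multiset ℕ), x ≤ b - 1 := fun x hx ↦
    Nat.le_sub_one_of_lt (Nat.digits_lt_base hb hx)
  have hlo : b ^ L ≤ n := (Nat.lt_digits_length_iff hb n).1 (by lia)
  exact h.sound (m := b.digits n) hf hlen hdigit hlo (by simpa using hn)

end SumSearch

theorem sumSearch_factorial : ∀ L < 7,
    SumSearch (fun n ↦ n = ((Nat.digits 10 n).map Nat.factorial).sum →
      n = 1 ∨ n = 2 ∨ n = 145 ∨ n = 40585) Nat.factorial (10 ^ L) 9 (L + 1) 0 := by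
  decide +kernel

theorem sum_factorial_digits_eq_self_iff (n : ℕ) (hn : 0 < n) :
    n = ((Nat.digits 10 n).map Nat.factorial).sum ↔
      n = 1 ∨ n = 2 ∨ n = 145 ∨ n = 40585 := by
  constructor
  · intro h
    have hlen : (Nat.digits 10 n).length ≤ 7 :=
      length_digits_le_of_eq_sum_map_digits (by decide)
        (fun d hd ↦ Nat.factorial_le (Nat.le_of_lt_succ hd)) (by decide) h
    have hpos : 0 < (Nat.digits 10 n).length :=
      List.length_pos_of_ne_nil (Nat.digits_ne_nil_iff_ne_zero.2 hn.ne')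
    obtain ⟨L, hL⟩ := Nat.exists_eq_succ_of_ne_zero hpos.ne'
    exact (sumSearch_factorial L (by lia)).of_length_digits Nat.monotone_factorial (by decide)
      hL h h
  · rintro (rfl | rfl | rfl | rfl) <;> simp [Nat.factorial]
end

section
/- The fractional part of (√5 + 2)^1000 is greater than 1 − 10^(−100); consequently the first 100 digits after the decimal point of (√5 + 2)^1000 are all equal to 9, and in particular the 100th digit after the decimal point is 9. -/
/-!
The number `(√5 + 2) ^ 2 = 9 + 4√5` and its conjugate `(√5 - 2) ^ 2 = 9 - 4√5` have integer sum and
product, so their `n`-th powers have integer sum. As the conjugate lies strictly between `0` and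
`1 / 10`, the number `(√5 + 2) ^ (2 * n)` falls short of an integer by less than `10 ^ (-n)`.
-/

theorem pow_add_pow_mem {R S : Type*} [CommRing R] [SetLike S R] [SubringClass S R] {s : S}
    {x y : R} (hadd : x + y ∈ s) (hmul : x * y ∈ s) (n : ℕ) : x ^ n + y ^ n ∈ s := by
  induction n using Nat.twoStepInduction with
  | zero => simpa only [pow_zero] using add_mem (one_mem s) (one_mem s)
  | one => simpa only [pow_one] using hadd
  | more n ih₀ ih₁ =>
    have recurrence : x ^ (n + 2) + y ^ (n + 2) =
        (x + y) * (x ^ (n + 1) + y ^ (n + 1)) - x * y * (x ^ n + y ^ n) := by ring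
    rw [recurrence]
    exact sub_mem (mul_mem hadd ih₁) (mul_mem hmul ih₀)

theorem fract_pow_eq_one_sub_pow {R : Type*} [CommRing R] [LinearOrder R] [IsStrictOrderedRing R]
    [FloorRing R] {x y : R} {a b : ℤ} (hadd : x + y = a) (hmul : x * y = b)
    (hy₀ : 0 < y) (hy₁ : y ≤ 1) (n : ℕ) : Int.fract (x ^ n) = 1 - y ^ n := by
  have hadd_mem : x + y ∈ (Int.castRingHom R).range := ⟨a, hadd.symm⟩
  have hmul_mem : x * y ∈ (Int.castRingHom R).range := ⟨b, hmul.symm⟩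
  obtain ⟨N, hN⟩ := pow_add_pow_mem hadd_mem hmul_mem n
  rw [eq_intCast] at hN
  refine Int.fract_eq_iff.2 ⟨sub_nonneg.2 (pow_le_one₀ hy₀.le hy₁),
    sub_lt_self 1 (pow_pos hy₀ n), N - 1, ?_⟩
  push_cast
  linear_combination -hN

section Digits

variable {K : Type*} [Field K] [LinearOrder K] [IsStrictOrderedRing K] [FloorRing K]

theorem floor_intCast_mul_of_one_sub_inv_le_fract {x : K} {c : ℤ} (hc : 0 < c)
    (hx : 1 - (c : K)⁻¹ ≤ Int.fract x) : ⌊(c : K) * x⌋ = c * (⌊x⌋ + 1) - 1 := by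
  have hc' : (0 : K) < c := Int.cast_pos.2 hc
  have lower : (c : K) - 1 ≤ c * Int.fract x := by
    calc (c : K) - 1 = c * (1 - (c : K)⁻¹) := by rw [mul_sub, mul_one, mul_inv_cancel₀ hc'.ne']
      _ ≤ c * Int.fract x := by gcongr
  have upper : (c : K) * Int.fract x < c := mul_lt_of_lt_one_right hc' (Int.fract_lt_one x)
  have split : (c : K) * x = c * ⌊x⌋ + c * Int.fract x := by
    rw [← mul_add, Int.floor_add_fract]
  rw [Int.floor_eq_iff, split]
  push_cast
  constructor <;> linarith

theorem floor_pow_mul_emod_eq_sub_one {x : K} {b : ℤ} (hb : 0 < b) {m : ℕ}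
    (hx : 1 - ((b : K) ^ m)⁻¹ ≤ Int.fract x) {k : ℕ} (hk₀ : k ≠ 0) (hkm : k ≤ m) :
    ⌊(b : K) ^ k * x⌋ % b = b - 1 := by
  have hb₁ : (1 : K) ≤ b := by exact_mod_cast hb
  have hxk : 1 - (((b ^ k : ℤ) : K))⁻¹ ≤ Int.fract x := by
    refine le_trans ?_ hx
    push_cast
    gcongr
  have hfloor := floor_intCast_mul_of_one_sub_inv_le_fract (pow_pos hb k) hxk
  rw [Int.cast_pow] at hfloor
  rw [hfloor, Int.emod_eq_iff hb.ne', sub_sub_sub_cancel_right]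
  exact ⟨by lia, by lia, dvd_sub dvd_rfl ((dvd_pow_self b hk₀).mul_right _)⟩

end Digits

theorem fract_sqrt_five_add_two_pow_two_mul (n : ℕ) :
    Int.fract ((√5 + 2) ^ (2 * n)) = 1 - ((√5 - 2) ^ 2) ^ n := by
  have hsq : √5 ^ 2 = 5 := Real.sq_sqrt (by norm_num)
  have hadd : (√5 + 2) ^ 2 + (√5 - 2) ^ 2 = (18 : ℤ) := by
    push_cast
    linear_combination 2 * hsq
  have hmul : (√5 + 2) ^ 2 * (√5 - 2) ^ 2 = (1 : ℤ) := by
    push_cast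
    linear_combination (√5 ^ 2 - 3) * hsq
  have hlower : 2 < √5 := Real.lt_sqrt_of_sq_lt (by norm_num)
  have hupper : √5 ≤ 3 := Real.sqrt_le_iff.2 (by norm_num)
  rw [pow_mul]
  exact fract_pow_eq_one_sub_pow hadd hmul (pow_pos (by linarith) 2)
    (pow_le_one₀ (by linarith) (by linarith)) n

theorem sq_sqrt_five_sub_two_lt_one_div_ten : (√5 - 2) ^ 2 < 1 / 10 := by
  have hlower : 2 ≤ √5 := Real.le_sqrt_of_sq_le (by norm_num)
  have hupper : √5 < 9 / 4 := (Real.sqrt_lt' (by norm_num)).2 (by norm_num)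
  calc (√5 - 2) ^ 2 < (9 / 4 - 2) ^ 2 := by gcongr
    _ < 1 / 10 := by norm_num

theorem one_sub_inv_ten_pow_lt_fract_sqrt_five_add_two_pow {n : ℕ} (hn : n ≠ 0) :
    1 - ((10 : ℝ) ^ n)⁻¹ < Int.fract ((√5 + 2) ^ (2 * n)) := by
  rw [fract_sqrt_five_add_two_pow_two_mul, ← inv_pow, ← one_div]
  exact sub_lt_sub_left
    (pow_lt_pow_left₀ sq_sqrt_five_sub_two_lt_one_div_ten (sq_nonneg _) hn) 1

theorem sqrt_five_power_fract_and_digits :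
    Int.fract ((Real.sqrt 5 + 2) ^ 1000) > 1 - (10 : ℝ) ^ (-100 : ℤ) ∧
    (∀ k : ℕ, 1 ≤ k → k ≤ 100 →
      ⌊(10 : ℝ) ^ k * (Real.sqrt 5 + 2) ^ 1000⌋ % 10 = 9) ∧
    ⌊(10 : ℝ) ^ 100 * (Real.sqrt 5 + 2) ^ 1000⌋ % 10 = 9 := by
  have hfract : 1 - ((10 : ℝ) ^ 100)⁻¹ < Int.fract ((√5 + 2) ^ 1000) := by
    calc 1 - ((10 : ℝ) ^ 100)⁻¹ ≤ 1 - ((10 : ℝ) ^ 500)⁻¹ := by gcongr <;> norm_num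
      _ < Int.fract ((√5 + 2) ^ (2 * 500)) :=
        one_sub_inv_ten_pow_lt_fract_sqrt_five_add_two_pow (by norm_num)
  have hdigits (k : ℕ) (hk₁ : 1 ≤ k) (hk : k ≤ 100) :
      ⌊(10 : ℝ) ^ k * (√5 + 2) ^ 1000⌋ % 10 = 9 :=
    floor_pow_mul_emod_eq_sub_one (b := 10) (by norm_num) hfract.le
      (Nat.one_le_iff_ne_zero.1 hk₁) hk
  exact ⟨hfract, hdigits, hdigits 100 (by norm_num) le_rfl⟩
end

section
/- Suppose a family of closed unit disks covers the plane: there is a set S ⊆ ℝ² of centers such that every point of ℝ² lies in the closed disk of radius 1 around some point of S. Then some point of the plane is covered at least three times: there exist a point p ∈ ℝ² and three pairwise distinct centers c₁, c₂, c₃ ∈ S such that the distance from p to each cᵢ is at most 1. -/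
/-!
One may assume that every point lies in only finitely many balls `B(x, r)`, `x ∈ S`. By compactness
the family of balls is then locally finite. Fix `c ∈ S`. The union of all balls other than `B(c, r)`
is closed and contains the complement of `B(c, r)`, so it also contains the sphere `∂B(c, r)`. This
sphere is connected in dimension at least two, and it does not fit into a single ball `B(a, r)` with
`a ≠ c`, because the point of `∂B(c, r)` opposite to `a` is too far from `a`. Hence two of the other
balls meet on the sphere, at a point of `B(c, r)`.
-/

open Metric Set

section ConnectedCover

variable {X ι : Type*} [TopologicalSpace X] {f : ι → Set X} {s : Set X}

theorem frontier_subset_iUnion_of_compl_subset (hf : LocallyFinite f)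
    (hclosed : ∀ i, IsClosed (f i)) (hs : sᶜ ⊆ ⋃ i, f i) : frontier s ⊆ ⋃ i, f i :=
  calc
    frontier s ⊆ closure sᶜ := by
      rw [frontier_eq_closure_inter_closure]
      exact inter_subset_right
    _ ⊆ ⋃ i, f i := closure_minimal hs (hf.isClosed_iUnion hclosed)

theorem exists_ne_nonempty_inter_of_isConnected (hf : LocallyFinite f)
    (hclosed : ∀ i, IsClosed (f i)) (hs : IsConnected s) (hcover : s ⊆ ⋃ i, f i)
    (hproper : ∀ i, ¬ s ⊆ f i) : ∃ i j, i ≠ j ∧ (s ∩ (f i ∩ f j)).Nonempty := by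
  obtain ⟨x, hx⟩ := hs.nonempty
  obtain ⟨i, hxi⟩ := mem_iUnion.mp (hcover hx)
  obtain ⟨y, hy, hyi⟩ := not_subset.mp (hproper i)
  let rest : Set X := ⋃ j : {j // j ≠ i}, f j
  have rest_closed : IsClosed rest :=
    (hf.comp_injective Subtype.val_injective).isClosed_iUnion fun j ↦ hclosed j
  have cover : s ⊆ f i ∪ rest := fun z hz ↦ by
    obtain ⟨j, hzj⟩ := mem_iUnion.mp (hcover hz)
    obtain rfl | hji := eq_or_ne j i
    · exact .inl hzj
    · exact .inr (mem_iUnion.mpr ⟨⟨j, hji⟩, hzj⟩)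
  obtain ⟨z, hz, hzi, hzrest⟩ := isPreconnected_closed_iff.mp hs.isPreconnected _ _ (hclosed i)
    rest_closed cover ⟨x, hx, hxi⟩ ⟨y, hy, (cover hy).resolve_left hyi⟩
  obtain ⟨⟨j, hji⟩, hzj⟩ := mem_iUnion.mp hzrest
  exact ⟨i, j, hji.symm, z, hz, hzi, hzj⟩

end ConnectedCover

section PointFinite

variable {X ι : Type*} [PseudoMetricSpace X] {c : ι → X} {r : ℝ}

theorem finite_setOf_center_mem_of_totallyBounded {K : Set X} (hK : TotallyBounded K)
    (hr : 0 < r) (hfin : ∀ p, {i | p ∈ closedBall (c i) r}.Finite) : {i | c i ∈ K}.Finite := by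
  obtain ⟨t, ht, hKt⟩ := Metric.totallyBounded_iff.mp hK r hr
  refine (ht.biUnion fun p _ ↦ hfin p).subset fun i hi ↦ ?_
  obtain ⟨p, hp, hip⟩ := mem_iUnion₂.mp (hKt hi)
  exact mem_iUnion₂.mpr ⟨p, hp, mem_closedBall_comm.mp (ball_subset_closedBall hip)⟩

theorem locallyFinite_closedBall_of_pointFinite [ProperSpace X] (hr : 0 < r)
    (hfin : ∀ p, {i | p ∈ closedBall (c i) r}.Finite) :
    LocallyFinite fun i ↦ closedBall (c i) r := by
  intro p
  have near_finite : {i | c i ∈ closedBall p (r + r)}.Finite :=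
    finite_setOf_center_mem_of_totallyBounded (isCompact_closedBall _ _).totallyBounded hr hfin
  refine ⟨closedBall p r, closedBall_mem_nhds p hr, near_finite.subset ?_⟩
  rintro i ⟨y, hyi, hyp⟩
  exact (dist_triangle_left _ _ y).trans (add_le_add hyi hyp)

end PointFinite

section NormedSpace

variable {E : Type*} [NormedAddCommGroup E] [NormedSpace ℝ E] {r : ℝ}

theorem not_sphere_subset_closedBall {a c : E} (hr : 0 ≤ r) (hac : a ≠ c) :
    ¬ sphere c r ⊆ closedBall a r := by
  have hpos : 0 < ‖c - a‖ := norm_pos_iff.mpr (sub_ne_zero.mpr hac.symm)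
  let q : E := c + (r / ‖c - a‖) • (c - a)
  have q_mem : q ∈ sphere c r := by
    rw [mem_sphere_iff_norm, add_sub_cancel_left, norm_smul, Real.norm_of_nonneg (by positivity),
      div_mul_cancel₀ _ hpos.ne']
  have dist_q : dist q a = ‖c - a‖ + r := by
    have q_sub : q - a = (1 + r / ‖c - a‖) • (c - a) := by module
    rw [dist_eq_norm, q_sub, norm_smul, Real.norm_of_nonneg (by positivity), add_mul, one_mul,
      div_mul_cancel₀ _ hpos.ne']
  intro hsub
  have : dist q a ≤ r := hsub q_mem
  linarith

theorem exists_mem_sphere_two_closedBalls_of_locallyFinite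
    (hrank : 1 < Module.rank ℝ E) (hr : 0 < r) {S : Set E}
    (hS : LocallyFinite fun x : S ↦ closedBall (x : E) r)
    (hcover : ∀ p, ∃ c ∈ S, dist p c ≤ r) (c : E) :
    ∃ p ∈ sphere c r, ∃ a ∈ S, ∃ b ∈ S, c ≠ a ∧ c ≠ b ∧ a ≠ b ∧ dist p a ≤ r ∧ dist p b ≤ r := by
  let others : ↥(S \ {c}) → Set E := fun x ↦ closedBall (x : E) r
  have others_locallyFinite : LocallyFinite others :=
    hS.comp_injective (inclusion_injective sdiff_subset)
  have others_closed (x) : IsClosed (others x) := isClosed_closedBall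
  have compl_subset : (closedBall c r)ᶜ ⊆ ⋃ x, others x := fun p hp ↦ by
    obtain ⟨x, hxS, hpx⟩ := hcover p
    have hxc : x ≠ c := fun h ↦ hp (h ▸ hpx)
    exact mem_iUnion.mpr ⟨⟨x, hxS, hxc⟩, hpx⟩
  have sphere_subset : sphere c r ⊆ ⋃ x, others x := by
    rw [← frontier_closedBall c hr.ne']
    exact frontier_subset_iUnion_of_compl_subset others_locallyFinite others_closed compl_subset
  obtain ⟨⟨a, haS, hac⟩, ⟨b, hbS, hbc⟩, hab, p, hp, hpa, hpb⟩ :=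
    exists_ne_nonempty_inter_of_isConnected others_locallyFinite others_closed
      (isConnected_sphere hrank c hr.le) sphere_subset
      fun x ↦ not_sphere_subset_closedBall hr.le x.2.2
  exact ⟨p, hp, a, haS, b, hbS, Ne.symm hac, Ne.symm hbc, fun h ↦ hab (Subtype.ext h), hpa, hpb⟩

theorem plane_unit_disk_cover_triple_point_general [FiniteDimensional ℝ E]
    (hrank : 1 < Module.rank ℝ E) (hr : 0 < r) (S : Set E) (hcover : ∀ p, ∃ c ∈ S, dist p c ≤ r) :
    ∃ p c₁ c₂ c₃ : E, c₁ ∈ S ∧ c₂ ∈ S ∧ c₃ ∈ S ∧ c₁ ≠ c₂ ∧ c₁ ≠ c₃ ∧ c₂ ≠ c₃ ∧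
      dist p c₁ ≤ r ∧ dist p c₂ ≤ r ∧ dist p c₃ ≤ r := by
  by_cases hfin : ∀ p, {x : S | p ∈ closedBall (x : E) r}.Finite
  · obtain ⟨c, hc, -⟩ := hcover 0
    obtain ⟨p, hp, a, ha, b, hb, hca, hcb, hab, hpa, hpb⟩ :=
      exists_mem_sphere_two_closedBalls_of_locallyFinite hrank hr
        (locallyFinite_closedBall_of_pointFinite hr hfin) hcover c
    exact ⟨p, c, a, b, hc, ha, hb, hca, hcb, hab, hp.le, hpa, hpb⟩
  · obtain ⟨p, hp⟩ := not_forall.mp hfin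
    let x := Set.Infinite.natEmbedding _ hp
    have x_ne {m n : ℕ} (hmn : m ≠ n) : (x m : S).1 ≠ (x n : S).1 := fun h ↦
      hmn (x.injective (Subtype.ext (Subtype.ext h)))
    exact ⟨p, _, _, _, (x 0).1.2, (x 1).1.2, (x 2).1.2, x_ne zero_ne_one, x_ne (by decide),
      x_ne (by decide), (x 0).2, (x 1).2, (x 2).2⟩

end NormedSpace

theorem plane_unit_disk_cover_triple_point (S : Set (EuclideanSpace ℝ (Fin 2)))
    (hcover : ∀ p : EuclideanSpace ℝ (Fin 2), ∃ c ∈ S, dist p c ≤ 1) :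
    ∃ (p : EuclideanSpace ℝ (Fin 2)) (c₁ c₂ c₃ : EuclideanSpace ℝ (Fin 2)),
      c₁ ∈ S ∧ c₂ ∈ S ∧ c₃ ∈ S ∧ c₁ ≠ c₂ ∧ c₁ ≠ c₃ ∧ c₂ ≠ c₃ ∧
      dist p c₁ ≤ 1 ∧ dist p c₂ ≤ 1 ∧ dist p c₃ ≤ 1 :=
  plane_unit_disk_cover_triple_point_general
    (by rw [← Module.finrank_eq_rank, finrank_euclideanSpace_fin]; norm_num) one_pos S hcover
end

section
/- Let D be the closed unit disk in ℝ² with center O. Suppose D = A ∪ B where A and B are closed sets whose interiors are disjoint, and suppose there exists an isometry g of the plane ℝ² with g(A) = B (so the two parts are congruent). Then the center O belongs to both parts: O ∈ A ∩ B. -/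
/-!
If `g` fixes the center `O`, then `O` lies in both parts as soon as it lies in one of them. Suppose
`c = g O ≠ O`. In dimension at least two there is a diameter of the disk orthogonal to the line
`Oc`, and both its endpoints are farther from `c` than the radius. As `B = g(A)` lies in the disk
about `c`, both endpoints lie in `A`, so their images lie in the disk about `O`. These images are
one diameter apart and hence have `O` as midpoint; but their midpoint is `c`.

The argument needs orthogonality only in the sense of Birkhoff, so it works in every strictly convex
space.
-/

open Filter Metric

/-- Birkhoff–James orthogonality in a real normed space: moving from `x` in either direction along
`y` does not decrease the norm. It replaces `inner ℝ x y = 0` when no inner product is available;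
the relation is not symmetric in general. -/
def BirkhoffOrthogonal {V : Type*} [SeminormedAddCommGroup V] [NormedSpace ℝ V] (x y : V) : Prop :=
  ∀ t : ℝ, ‖x‖ ≤ ‖x + t • y‖

section BirkhoffOrthogonal

variable {V : Type*}

lemma BirkhoffOrthogonal.smul_left [SeminormedAddCommGroup V] [NormedSpace ℝ V] {x y : V}
    (h : BirkhoffOrthogonal x y) (c : ℝ) : BirkhoffOrthogonal (c • x) y := by
  intro t
  rcases eq_or_ne c 0 with rfl | hc
  · simp
  · calc ‖c • x‖ = ‖c‖ * ‖x‖ := norm_smul c x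
      _ ≤ ‖c‖ * ‖x + (c⁻¹ * t) • y‖ := by gcongr; exact h _
      _ = ‖c • x + t • y‖ := by rw [← norm_smul, smul_add, smul_smul, mul_inv_cancel_left₀ hc]

lemma BirkhoffOrthogonal.neg_left [SeminormedAddCommGroup V] [NormedSpace ℝ V] {x y : V}
    (h : BirkhoffOrthogonal x y) : BirkhoffOrthogonal (-x) y := by
  simpa only [neg_one_smul] using h.smul_left (-1)

lemma BirkhoffOrthogonal.norm_lt_norm_add [NormedAddCommGroup V] [NormedSpace ℝ V]
    [StrictConvexSpace ℝ V] {x y : V} (h : BirkhoffOrthogonal x y) (hy : y ≠ 0) :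
    ‖x‖ < ‖x + y‖ := by
  have hle : ‖x‖ ≤ ‖x + y‖ := by simpa only [one_smul] using h 1
  refine hle.lt_of_ne fun heq ↦ ?_
  have hmid : ‖x + (1 / 2 : ℝ) • y‖ < ‖x‖ := by
    convert (norm_midpoint_lt_iff heq).2 (by simpa using hy) using 2
    module
  exact (h (1 / 2)).not_gt hmid

lemma exists_birkhoffOrthogonal_sub_smul [NormedAddCommGroup V] [NormedSpace ℝ V] (x y : V) :
    ∃ t : ℝ, BirkhoffOrthogonal (x - t • y) y := by
  rcases eq_or_ne y 0 with rfl | hy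
  · exact ⟨0, fun t ↦ by simp⟩
  have hlim : Tendsto (fun t : ℝ ↦ ‖x - t • y‖) (cocompact ℝ) atTop := by
    have hlin : Tendsto (fun t : ℝ ↦ ‖t‖ * ‖y‖ - ‖x‖) (cocompact ℝ) atTop :=
      tendsto_atTop_add_const_right _ _
        (tendsto_norm_cocompact_atTop.atTop_mul_const (norm_pos_iff.2 hy))
    refine tendsto_atTop_mono (fun t ↦ ?_) hlin
    rw [← norm_smul, norm_sub_rev x]
    exact norm_sub_norm_le _ _
  obtain ⟨t, ht⟩ := Continuous.exists_forall_le (by fun_prop) hlim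
  refine ⟨t, fun s ↦ (ht (t - s)).trans_eq ?_⟩
  congr 1
  module

lemma exists_notMem_span_singleton_of_one_lt_rank {K : Type*} [DivisionRing K] [AddCommGroup V]
    [Module K V] (hdim : 1 < Module.rank K V) (y : V) : ∃ x : V, x ∉ Submodule.span K {y} := by
  by_contra! hspan
  have hrank : Module.rank K (Submodule.span K {y}) ≤ 1 := by
    simpa using rank_span_le (R := K) {y}
  rw [Submodule.eq_top_iff'.2 hspan, rank_top] at hrank
  exact hrank.not_gt hdim

lemma exists_norm_eq_birkhoffOrthogonal [NormedAddCommGroup V] [NormedSpace ℝ V]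
    (hdim : 1 < Module.rank ℝ V) (y : V) {r : ℝ} (hr : 0 ≤ r) :
    ∃ x : V, ‖x‖ = r ∧ BirkhoffOrthogonal x y := by
  obtain ⟨z, hz⟩ := exists_notMem_span_singleton_of_one_lt_rank hdim y
  obtain ⟨t, ht⟩ := exists_birkhoffOrthogonal_sub_smul z y
  have hne : z - t • y ≠ 0 := fun h ↦
    hz (Submodule.mem_span_singleton.2 ⟨t, (sub_eq_zero.1 h).symm⟩)
  refine ⟨(r / ‖z - t • y‖) • (z - t • y), ?_, ht.smul_left _⟩
  rw [norm_smul, norm_div, norm_norm, div_mul_cancel₀ _ (norm_ne_zero_iff.2 hne),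
    Real.norm_of_nonneg hr]

end BirkhoffOrthogonal

section StrictConvexSpace

variable {V P : Type*} [NormedAddCommGroup V] [NormedSpace ℝ V] [StrictConvexSpace ℝ V]
  [MetricSpace P] [NormedAddTorsor V P]

include V in
lemma eq_of_two_mul_le_dist_of_mem_closedBall {a b c d : P} {r : ℝ} (hab : 2 * r ≤ dist a b)
    (hac : a ∈ closedBall c r) (hbc : b ∈ closedBall c r)
    (had : a ∈ closedBall d r) (hbd : b ∈ closedBall d r) : c = d := by
  have eq_midpoint {e : P} (ha : a ∈ closedBall e r) (hb : b ∈ closedBall e r) :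
      e = midpoint ℝ a b := by
    rw [mem_closedBall] at ha
    rw [mem_closedBall'] at hb
    have htri := dist_triangle a e b
    exact eq_midpoint_of_dist_eq_half (by linarith) (by linarith)
  rw [eq_midpoint hac hbc, eq_midpoint had hbd]

include V in
lemma exists_mem_closedBall_dist_eq_two_mul_lt_dist (hdim : 1 < Module.rank ℝ V) {p q : P}
    (hpq : p ≠ q) {r : ℝ} (hr : 0 ≤ r) :
    ∃ a ∈ closedBall p r, ∃ b ∈ closedBall p r, dist a b = 2 * r ∧ r < dist a q ∧ r < dist b q := by
  obtain ⟨x, hx, hxpq⟩ := exists_norm_eq_birkhoffOrthogonal hdim (p -ᵥ q) hr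
  have hne : p -ᵥ q ≠ 0 := vsub_ne_zero.2 hpq
  refine ⟨x +ᵥ p, by simp [hx], -x +ᵥ p, by simp [hx], ?_, ?_, ?_⟩
  · rw [dist_vadd_cancel_right, dist_eq_norm, sub_neg_eq_add, ← two_smul ℝ x, norm_smul,
      Real.norm_two, hx]
  · rw [dist_eq_norm_vsub V, vadd_vsub_assoc, ← hx]
    exact hxpq.norm_lt_norm_add hne
  · rw [dist_eq_norm_vsub V, vadd_vsub_assoc, ← hx, ← norm_neg x]
    exact hxpq.neg_left.norm_lt_norm_add hne

include V in
lemma isometry_center_eq_center_of_union_image_eq_closedBall (hdim : 1 < Module.rank ℝ V)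
    {g : P → P} (hg : Isometry g) {O : P} {r : ℝ} (hr : 0 ≤ r) {A : Set P}
    (hunion : A ∪ g '' A = closedBall O r) : g O = O := by
  have hgA : ∀ a ∈ A, g a ∈ closedBall O r := fun a ha ↦
    hunion.subset (Or.inr (Set.mem_image_of_mem g ha))
  have hgA_center : ∀ b ∈ g '' A, dist b (g O) ≤ r := by
    rintro _ ⟨a, ha, rfl⟩
    simpa only [hg.dist_eq, mem_closedBall] using hunion.subset (Or.inl ha)
  by_contra hne
  obtain ⟨a, ha, b, hb, hab, ha_far, hb_far⟩ :=
    exists_mem_closedBall_dist_eq_two_mul_lt_dist hdim (Ne.symm hne) hr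
  have haA : a ∈ A := (hunion.superset ha).resolve_right fun h ↦ (hgA_center a h).not_gt ha_far
  have hbA : b ∈ A := (hunion.superset hb).resolve_right fun h ↦ (hgA_center b h).not_gt hb_far
  refine hne (eq_of_two_mul_le_dist_of_mem_closedBall (hg.dist_eq a b ▸ hab.ge) ?_ ?_
    (hgA a haA) (hgA b hbA))
  · simpa only [mem_closedBall, hg.dist_eq] using ha
  · simpa only [mem_closedBall, hg.dist_eq] using hb

include V in
theorem broken_line_halving_disk_passes_through_center_general (hdim : 1 < Module.rank ℝ V)
    {O : P} {r : ℝ} (hr : 0 ≤ r) {A B : Set P} (hunion : A ∪ B = closedBall O r)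
    {g : P → P} (hg : Isometry g) (hgAB : g '' A = B) : O ∈ A ∩ B := by
  subst hgAB
  have hfix : g O = O := isometry_center_eq_center_of_union_image_eq_closedBall hdim hg hr hunion
  have hiff : O ∈ g '' A ↔ O ∈ A := by
    simpa only [hfix] using hg.injective.mem_set_image (a := O) (s := A)
  have hO : O ∈ A ∪ g '' A := hunion.superset (mem_closedBall_self hr)
  rw [Set.mem_union, hiff, or_self] at hO
  exact ⟨hO, hiff.2 hO⟩

end StrictConvexSpace

theorem broken_line_halving_disk_passes_through_center
    (O : EuclideanSpace ℝ (Fin 2)) (A B : Set (EuclideanSpace ℝ (Fin 2)))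
    (hA : IsClosed A) (hB : IsClosed B)
    (hunion : A ∪ B = Metric.closedBall O 1)
    (hint : interior A ∩ interior B = ∅)
    (g : EuclideanSpace ℝ (Fin 2) ≃ᵢ EuclideanSpace ℝ (Fin 2))
    (hg : g '' A = B) :
    O ∈ A ∩ B := by
  have hdim : 1 < Module.rank ℝ (EuclideanSpace ℝ (Fin 2)) := by
    rw [← Module.finrank_eq_rank, finrank_euclideanSpace_fin]
    exact_mod_cast one_lt_two
  exact broken_line_halving_disk_passes_through_center_general hdim zero_le_one hunion g.isometry hg
end
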